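/- Proposition 3 (formal version — the ⟨s⟩-adic and ⟨x⟩-adic topologies on the formal Brieskorn lattice coincide): for every k ≥ 1 one has the sandwich of ℂ[[s]]-submodules ⟨x₁,…,xₙ⟩^{2km}·A + M ⊆ s^k·A + M ⊆ ⟨x₁,…,xₙ⟩^k·A + M, where m ≥ 1 is such that ⟨x₁,…,xₙ⟩^m ⊆ J(f) and ⟨x₁,…,xₙ⟩·A denotes the ideal of A generated by x₁,…,xₙ. Consequently the filtrations (s^k·H)_k and (image of ⟨x₁,…,xₙ⟩^k·A in H)_k of H = A/M define the same topology. -/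

import Mathlib

noncomputable section

open scoped Pointwise

/-- The formal partial derivative `∂ᵢ` with respect to the `i`th variable, determined by
`coeff α (∂ᵢ g) = (α i + 1) • coeff (α + eᵢ) g`. -/
def pd {σ : Type*} (i : σ) (g : MvPowerSeries σ ℂ) : MvPowerSeries σ ℂ :=
  fun α => ((α i : ℂ) + 1) * MvPowerSeries.coeff (α + Finsupp.single i 1) g

lemma coeff_pd {σ : Type*} (i : σ) (g : MvPowerSeries σ ℂ) (α : σ →₀ ℕ) :
    MvPowerSeries.coeff α (pd i g) =
      ((α i : ℂ) + 1) * MvPowerSeries.coeff (α + Finsupp.single i 1) g := rfl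

variable (n : ℕ)

/-- `R = ℂ[[x₁,…,xₙ]]`. -/
abbrev R' := MvPowerSeries (Fin n) ℂ

/-- `A = ℂ[[s,x₁,…,xₙ]]`, where `s` is the 0th variable and `xᵢ` is the variable
of index `i` (`1 ≤ i ≤ n`). -/
abbrev A' := MvPowerSeries (Fin (n + 1)) ℂ

/-- The variable `s` of `A`. -/
def sv : A' n := MvPowerSeries.X 0

/-- Forget the `s`-exponent of a multi-index of `A`. -/
def tailF (β : Fin (n + 1) →₀ ℕ) : Fin n →₀ ℕ :=
  Finsupp.equivFunOnFinite.symm fun i => β i.succ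

/-- The inclusion `R ⊆ A` as the subring of series not involving `s`. -/
def inclR (g : R' n) : A' n :=
  fun β => if β 0 = 0 then MvPowerSeries.coeff (tailF n β) g else 0

/-- The inclusion `ℂ[[s]] ⊆ A` as the subring of series in `s` alone. -/
def toA (p : PowerSeries ℂ) : A' n :=
  fun β => if tailF n β = 0 then PowerSeries.coeff (β 0) p else 0

lemma coeff_inclR (g : R' n) (β : Fin (n + 1) →₀ ℕ) :
    MvPowerSeries.coeff β (inclR n g) =
      if β 0 = 0 then MvPowerSeries.coeff (tailF n β) g else 0 := rfl

/-- The `ℂ[[s]]`-linear operator `Fᵢ(g) = ∂ᵢ(f)·g − s·∂ᵢ(g)` on `A`. -/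
def FF (f : R' n) (i : Fin n) (g : A' n) : A' n :=
  inclR n (pd i f) * g - sv n * pd i.succ g

/-- `M = range F₁ + ⋯ + range Fₙ`, so that `H = A/M` is the formal Brieskorn lattice. -/
def Mset (f : R' n) : Set (A' n) :=
  {a | ∃ q : Fin n → A' n, a = ∑ i, FF n f i (q i)}

/-- The Jacobian ideal `J(f) = ⟨∂₁f,…,∂ₙf⟩` of `R`. -/
def Jf (f : R' n) : Ideal (R' n) :=
  Ideal.span (Set.range fun i : Fin n => pd i f)

/-- The maximal ideal `⟨x₁,…,xₙ⟩` of `R = ℂ[[x₁,…,xₙ]]`. -/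
def mx : Ideal (R' n) :=
  Ideal.span (Set.range (MvPowerSeries.X : Fin n → R' n))

/-- The ideal `J(f)·A` of `A` generated by `∂₁(f),…,∂ₙ(f)`. -/
def JA (f : R' n) : Ideal (A' n) :=
  Ideal.span (Set.range fun i : Fin n => inclR n (pd i f))

/-- The ideal `⟨x₁,…,xₙ⟩·A` of `A` generated by the variables `x₁,…,xₙ` (not `s`). -/
def XA : Ideal (A' n) :=
  Ideal.span (Set.range fun i : Fin n => (MvPowerSeries.X i.succ : A' n))

lemma pd_add {σ : Type*} (i : σ) (a b : MvPowerSeries σ ℂ) :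
    pd i (a + b) = pd i a + pd i b := by
  ext α; simp [coeff_pd, mul_add]

lemma pd_smul {σ : Type*} (i : σ) (c : ℂ) (a : MvPowerSeries σ ℂ) :
    pd i (c • a) = c • pd i a := by
  ext α; simp [coeff_pd]; ring

lemma FF_add (f : R' n) (i : Fin n) (a b : A' n) :
    FF n f i (a + b) = FF n f i a + FF n f i b := by
  simp only [FF, pd_add, mul_add]; ring

lemma FF_smul (f : R' n) (i : Fin n) (c : ℂ) (a : A' n) :
    FF n f i (c • a) = c • FF n f i a := by
  simp only [FF, pd_smul, Algebra.mul_smul_comm, smul_sub]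

lemma FF_zero (f : R' n) (i : Fin n) : FF n f i 0 = 0 := by
  simpa using FF_smul n f i 0 0

/-- `M` as a `ℂ`-submodule of `A`. -/
def Msub (f : R' n) : Submodule ℂ (A' n) where
  carrier := Mset n f
  zero_mem' := ⟨0, by simp [FF_zero]⟩
  add_mem' := by
    rintro a b ⟨q, rfl⟩ ⟨q', rfl⟩
    exact ⟨q + q', by simp [FF_add, Finset.sum_add_distrib]⟩
  smul_mem' := by
    rintro c a ⟨q, rfl⟩
    exact ⟨c • q, by simp [FF_smul, Finset.smul_sum]⟩

/-- The inclusion `R ⊆ A` as a `ℂ`-linear map. -/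
def inclL : R' n →ₗ[ℂ] A' n where
  toFun := inclR n
  map_add' a b := by
    ext β; simp only [coeff_inclR, map_add]; split <;> simp
  map_smul' c a := by
    ext β; simp only [coeff_inclR, map_smul, RingHom.id_apply]; split <;> simp

/-!
In `A/M` the relation `∂ᵢ(f)·g ≡ s·∂ᵢ(g)` can be read in both directions.

From left to right it trades a factor in `J(f)` for a factor `s`, at the cost of a derivative. A
derivation lowers membership in the powers of an ideal `I` by at most one, so if `Iᵐ ⊆ J(f)·A` then
each factor `s` costs `m + 1` powers of `I`. Hence `I^(k(m+1)) ⊆ s^k·A + M`, and `k(m+1) ≤ 2km`.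

From right to left it removes a factor `s` by integrating: a multiple of `xᵢ^j` is `∂ᵢ` of a
multiple of `xᵢ^(j+1)`, so `s^k·A ⊆ xᵢ^k·A + M` for any single variable `xᵢ`.
-/

section General

open MvPowerSeries

lemma add_subset_add_of_smodEq {R M : Type*} [Ring R] [AddCommGroup M] [Module R M]
    {N : Submodule R M} {S T : Set M} (h : ∀ a ∈ S, ∃ b ∈ T, a ≡ b [SMOD N]) :
    S + (N : Set M) ⊆ T + N := by
  rintro _ ⟨a, ha, c, hc, rfl⟩
  obtain ⟨b, hb, hab⟩ := h a ha
  exact ⟨b, hb, a - b + c, N.add_mem (SModEq.sub_mem.1 hab) hc, by dsimp only; abel⟩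

lemma derivation_apply_mem_pow_smul_top {R A M : Type*} [CommSemiring R] [CommSemiring A]
    [AddCommMonoid M] [Algebra R A] [Module A M] [Module R M] (D : Derivation R A M) {I : Ideal A}
    {k : ℕ} {a : A} (ha : a ∈ I ^ (k + 1)) : D a ∈ I ^ k • (⊤ : Submodule A M) := by
  induction k generalizing a with
  | zero => simp
  | succ k ih =>
    rw [pow_succ] at ha
    induction ha using Submodule.mul_induction_on' with
    | mem_mul_mem b hb c hc =>
      rw [D.leibniz]
      refine add_mem (Submodule.smul_mem_smul hb Submodule.mem_top) ?_
      rw [pow_succ', Submodule.mul_smul]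
      exact Submodule.smul_mem_smul hc (ih hb)
    | add b _ c _ hb hc =>
      rw [map_add]
      exact add_mem hb hc

lemma exists_X_pow_succ_dvd_pderiv_eq {σ K : Type*} [Semifield K] [CharZero K] (i : σ) {j : ℕ}
    {g : MvPowerSeries σ K} (hg : X i ^ j ∣ g) :
    ∃ h, X i ^ (j + 1) ∣ h ∧ pderiv K i h = g := by
  -- When `α i = 0`, the division by zero makes the coefficient of the antiderivative vanish.
  let h : MvPowerSeries σ K := fun α ↦ coeff (α - Finsupp.single i 1) g / (α i : K)
  have coeff_h (α : σ →₀ ℕ) : coeff α h =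
      coeff (α - Finsupp.single i 1) g / (α i : K) := rfl
  refine ⟨h, X_pow_dvd_iff.2 fun α hα ↦ ?_, ?_⟩
  · rw [coeff_h]
    rcases Nat.eq_zero_or_pos (α i) with h0 | hpos
    · simp [h0]
    · have hlt : (α - Finsupp.single i 1 : σ →₀ ℕ) i < j := by
        simp only [Finsupp.tsub_apply, Finsupp.single_eq_same]
        omega
      rw [X_pow_dvd_iff.1 hg _ hlt, zero_div]
  · ext α
    have hne : (α i : K) + 1 ≠ 0 := Nat.cast_add_one_ne_zero _
    simp [coeff_pderiv, coeff_h, hne]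

lemma pd_eq_pderiv {σ : Type*} (i : σ) (g : MvPowerSeries σ ℂ) :
    pd i g = pderiv ℂ i g := by
  ext α
  rw [coeff_pd, coeff_pderiv, mul_comm]

end General

section ExtendedIdeals

open MvPowerSeries

variable {n}

lemma inclR_eq_rename (g : R' n) :
    inclR n g = rename (Fin.succEmb n) g := by
  ext β
  rw [coeff_inclR]
  split_ifs with hβ
  · have htail : β = Finsupp.embDomain (Fin.succEmb n) (tailF n β) := by
      ext i
      cases i using Fin.cases with
      | zero => rw [hβ, Finsupp.embDomain_of_notMem_range _ _ _ (by simp)]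
      | succ i => exact (Finsupp.embDomain_apply_self (Fin.succEmb n) (tailF n β) i).symm
    conv_rhs => rw [htail]
    rw [coeff_embDomain_rename]
  · rw [coeff_rename_eq_zero]
    rintro ⟨α, rfl⟩
    exact hβ (Finsupp.mapDomain_of_notMem_range α 0 (by simp))

lemma XA_eq_map : XA n = (mx n).map (rename (R := ℂ) (Fin.succEmb n)) := by
  simp [XA, mx, Ideal.map_span, ← Set.range_comp, Function.comp_def]

lemma JA_eq_map (f : R' n) :
    JA n f = (Jf n f).map (rename (R := ℂ) (Fin.succEmb n)) := by
  simp [JA, Jf, Ideal.map_span, ← Set.range_comp, Function.comp_def, inclR_eq_rename]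

lemma XA_pow_le_JA {f : R' n} {m : ℕ} (hm : mx n ^ m ≤ Jf n f) : XA n ^ m ≤ JA n f := by
  rw [XA_eq_map, JA_eq_map, ← Ideal.map_pow]
  exact Ideal.map_mono hm

lemma X_succ_pow_mem_XA_pow (i : Fin n) (k : ℕ) : (X i.succ : A' n) ^ k ∈ XA n ^ k :=
  Ideal.pow_mem_pow (Ideal.subset_span (Set.mem_range_self i)) k

end ExtendedIdeals

section BrieskornLattice

open MvPowerSeries

variable {n} {f : R' n}

lemma pderiv_succ_sv_mul (i : Fin n) (g : A' n) :
    pderiv ℂ i.succ (sv n * g) = sv n * pderiv ℂ i.succ g := by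
  simp [sv, pderiv_X_of_ne (Fin.succ_ne_zero i).symm]

lemma FF_sv_mul (i : Fin n) (g : A' n) : FF n f i (sv n * g) = sv n * FF n f i g := by
  simp only [FF, pd_eq_pderiv, pderiv_succ_sv_mul]
  ring

lemma FF_mem_Msub (i : Fin n) (g : A' n) : FF n f i g ∈ Msub n f := by
  refine ⟨Pi.single i g, ?_⟩
  have hzero (j : Fin n) (hj : j ≠ i) :
      FF n f j ((Pi.single i g : Fin n → A' n) j) = 0 := by
    rw [Pi.single_eq_of_ne hj, FF_zero]
  rw [Fintype.sum_eq_single i hzero, Pi.single_eq_same]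

lemma inclR_pd_mul_smodEq (i : Fin n) (g : A' n) :
    inclR n (pd i f) * g ≡ sv n * pderiv ℂ i.succ g [SMOD Msub n f] := by
  rw [SModEq.sub_mem, ← pd_eq_pderiv]
  exact FF_mem_Msub i g

lemma sv_mul_mem_Msub {a : A' n} (ha : a ∈ Msub n f) : sv n * a ∈ Msub n f := by
  obtain ⟨q, rfl⟩ := ha
  exact ⟨fun i ↦ sv n * q i, by simp only [FF_sv_mul, Finset.mul_sum]⟩

lemma sv_mul_smodEq_sv_mul {a b : A' n} (h : a ≡ b [SMOD Msub n f]) :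
    sv n * a ≡ sv n * b [SMOD Msub n f] := by
  rw [SModEq.sub_mem, ← mul_sub]
  exact sv_mul_mem_Msub (SModEq.sub_mem.1 h)

lemma exists_mem_pow_smodEq_sv_mul {I : Ideal (A' n)} {j : ℕ} {a : A' n}
    (ha : a ∈ I ^ (j + 1) * JA n f) : ∃ b ∈ I ^ j, a ≡ sv n * b [SMOD Msub n f] := by
  obtain ⟨g, hg, rfl⟩ := (Submodule.mem_ideal_smul_span_iff_exists_sum _ _ _).1 ha
  refine ⟨g.sum fun i gᵢ ↦ pderiv ℂ i.succ gᵢ, Ideal.sum_mem _ fun i _ ↦ ?_, ?_⟩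
  · simpa using derivation_apply_mem_pow_smul_top (pderiv ℂ i.succ) (hg i)
  · rw [Finsupp.mul_sum]
    refine SModEq.sum fun i _ ↦ ?_
    simp only [smul_eq_mul, mul_comm (g i)]
    exact inclR_pd_mul_smodEq i (g i)

lemma exists_smodEq_sv_pow_mul {I : Ideal (A' n)} {m : ℕ} (hI : I ^ m ≤ JA n f) (k : ℕ)
    {a : A' n} (ha : a ∈ I ^ (k * (m + 1))) : ∃ b, a ≡ sv n ^ k * b [SMOD Msub n f] := by
  induction k generalizing a with
  | zero => exact ⟨a, by simp⟩
  | succ k ih =>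
    rw [show (k + 1) * (m + 1) = k * (m + 1) + 1 + m by ring, pow_add] at ha
    obtain ⟨b, hb, hab⟩ := exists_mem_pow_smodEq_sv_mul (Ideal.mul_mono_right hI ha)
    obtain ⟨c, hbc⟩ := ih hb
    refine ⟨c, ?_⟩
    rw [pow_succ', mul_assoc]
    exact hab.trans (sv_mul_smodEq_sv_mul hbc)

lemma exists_X_pow_succ_dvd_sv_mul_smodEq (i : Fin n) {j : ℕ} {a : A' n}
    (ha : X i.succ ^ j ∣ a) :
    ∃ b, X i.succ ^ (j + 1) ∣ b ∧ sv n * a ≡ b [SMOD Msub n f] := by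
  obtain ⟨h, hdvd, rfl⟩ := exists_X_pow_succ_dvd_pderiv_eq i.succ ha
  exact ⟨inclR n (pd i f) * h, hdvd.mul_left _, (inclR_pd_mul_smodEq i h).symm⟩

lemma exists_X_pow_dvd_sv_pow_mul_smodEq (i : Fin n) (k : ℕ) (a : A' n) :
    ∃ b, X i.succ ^ k ∣ b ∧ sv n ^ k * a ≡ b [SMOD Msub n f] := by
  induction k with
  | zero => exact ⟨a, by simp⟩
  | succ k ih =>
    obtain ⟨b, hb, hab⟩ := ih
    obtain ⟨c, hc, hbc⟩ := exists_X_pow_succ_dvd_sv_mul_smodEq i hb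
    refine ⟨c, hc, ?_⟩
    rw [pow_succ', mul_assoc]
    exact (sv_mul_smodEq_sv_mul hab).trans hbc

lemma pow_add_Mset_subset_span_sv_pow_add_Mset {I : Ideal (A' n)} {m : ℕ} (hI : I ^ m ≤ JA n f)
    (k : ℕ) :
    ((I ^ (k * (m + 1)) : Ideal (A' n)) : Set (A' n)) + Mset n f ⊆
      ((Ideal.span {sv n ^ k} : Ideal (A' n)) : Set (A' n)) + Mset n f :=
  add_subset_add_of_smodEq (N := Msub n f) fun _ ha ↦
    let ⟨b, hab⟩ := exists_smodEq_sv_pow_mul hI k ha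
    ⟨sv n ^ k * b, Ideal.mem_span_singleton.2 (dvd_mul_right _ b), hab⟩

lemma span_sv_pow_add_Mset_subset_span_X_pow_add_Mset (i : Fin n) (k : ℕ) :
    ((Ideal.span {sv n ^ k} : Ideal (A' n)) : Set (A' n)) + Mset n f ⊆
      ((Ideal.span {X i.succ ^ k} : Ideal (A' n)) : Set (A' n)) + Mset n f := by
  refine add_subset_add_of_smodEq (N := Msub n f) fun a ha ↦ ?_
  obtain ⟨c, rfl⟩ := Ideal.mem_span_singleton.1 ha
  obtain ⟨b, hb, hcb⟩ := exists_X_pow_dvd_sv_pow_mul_smodEq i k c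
  exact ⟨b, Ideal.mem_span_singleton.2 hb, hcb⟩

end BrieskornLattice

/-- **Proposition 3 (formal version)**: for every `k ≥ 1` one has the sandwich
`⟨x₁,…,xₙ⟩^{2km}·A + M ⊆ s^k·A + M ⊆ ⟨x₁,…,xₙ⟩^k·A + M`; hence the `⟨s⟩`-adic and
`⟨x⟩`-adic topologies on the formal Brieskorn lattice `H = A/M` coincide. -/
theorem brieskorn_topologies_coincide (n : ℕ) (hn : 1 ≤ n) (f : R' n)
    (hf0 : MvPowerSeries.constantCoeff f = 0)
    (m : ℕ) (hm : 1 ≤ m) (hiso : mx n ^ m ≤ Jf n f) :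
    ∀ k : ℕ, 1 ≤ k →
      ((XA n ^ (2 * k * m) : Ideal (A' n)) : Set (A' n)) + Mset n f ⊆
        ((Ideal.span {sv n ^ k} : Ideal (A' n)) : Set (A' n)) + Mset n f ∧
      ((Ideal.span {sv n ^ k} : Ideal (A' n)) : Set (A' n)) + Mset n f ⊆
        ((XA n ^ k : Ideal (A' n)) : Set (A' n)) + Mset n f := by
  intro k _
  have hexp : k * (m + 1) ≤ 2 * k * m := by nlinarith
  constructor
  · exact (Set.add_subset_add_right (Ideal.pow_le_pow_right hexp)).trans
      (pow_add_Mset_subset_span_sv_pow_add_Mset (XA_pow_le_JA hiso) k)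
  · exact (span_sv_pow_add_Mset_subset_span_X_pow_add_Mset ⟨0, hn⟩ k).trans
      (Set.add_subset_add_right
        ((Ideal.span_singleton_le_iff_mem _).2 (X_succ_pow_mem_XA_pow ⟨0, hn⟩ k)))
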